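/- Define f(θ; x, v_1^M) = (1/M) Σ_{j=1}^M [ v_j^⊤ ∇_x s_m(x;θ) v_j + ½ (v_j^⊤ s_m(x;θ))² ]. Suppose that for θ₁, θ₂ near θ* and all i, j, ‖∇²_θ ∂_i∂_j l_m(x;θ₁) − ∇²_θ ∂_i∂_j l_m(x;θ₂)‖_F ≤ M_{ij}(x) ‖θ₁ − θ₂‖₂ and ‖∇²_θ (∂_i l_m ∂_j l_m)(x;θ₁) − ∇²_θ (∂_i l_m ∂_j l_m)(x;θ₂)‖_F ≤ N_{ij}(x) ‖θ₁ − θ₂‖₂, with E_{p_d}[M_{ij}²(x)] < ∞ and E_{p_d}[N_{ij}²(x)] < ∞, and that the i.i.d. projection vectors v_1,…,v_M satisfy E[‖v‖²] < ∞ and E[‖v v^⊤‖_F²] < ∞. Then there exists L(x, v_1^M) ≥ 0 such that for all θ₁, θ₂ near θ*, ‖∇²_θ f(θ₁; x, v_1^M) − ∇²_θ f(θ₂; x, v_1^M)‖_F ≤ L(x, v_1^M) ‖θ₁ − θ₂‖₂, and E_{p_d, p_v}[L²(x, v_1^M)] < ∞. (Lemma B.5 of the paper.) -/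

import Mathlib

open MeasureTheory

noncomputable section

/-- `∂ᵢ log p_m(x;θ)`, the `i`-th partial derivative in `x` of the log-density. -/
def dLx {D K : ℕ} (pm : EuclideanSpace ℝ (Fin K) → (Fin D → ℝ) → ℝ)
    (θ : EuclideanSpace ℝ (Fin K)) (x : Fin D → ℝ) (i : Fin D) : ℝ :=
  fderiv ℝ (fun y => Real.log (pm θ y)) x (Pi.single i 1)

/-- `∂ᵢ∂ⱼ log p_m(x;θ)`, a second partial derivative in `x` of the log-density. -/
def d2Lx {D K : ℕ} (pm : EuclideanSpace ℝ (Fin K) → (Fin D → ℝ) → ℝ)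
    (θ : EuclideanSpace ℝ (Fin K)) (x : Fin D → ℝ) (i j : Fin D) : ℝ :=
  fderiv ℝ (fun y => dLx pm θ y j) x (Pi.single i 1)

/-- `f(θ; x, v_1^M) = (1/M) Σⱼ [vⱼᵀ ∇ₓ s_m(x;θ) vⱼ + ½ (vⱼᵀ s_m(x;θ))²]`. -/
def avgF {D K M : ℕ} (pm : EuclideanSpace ℝ (Fin K) → (Fin D → ℝ) → ℝ)
    (θ : EuclideanSpace ℝ (Fin K)) (x : Fin D → ℝ) (vs : Fin M → Fin D → ℝ) : ℝ :=
  (1 / (M : ℝ)) * ∑ k : Fin M,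
    ((∑ i, ∑ j, vs k i * vs k j * d2Lx pm θ x i j)
      + (1/2) * (∑ i, vs k i * dLx pm θ x i) ^ 2)

/-- The `(a,b)` entry of the Hessian in `θ` of a scalar function on the parameter space. -/
def thetaHess2 {K : ℕ} (h : EuclideanSpace ℝ (Fin K) → ℝ) (θ : EuclideanSpace ℝ (Fin K))
    (a b : Fin K) : ℝ :=
  fderiv ℝ (fun θ₁ => fderiv ℝ h θ₁ (EuclideanSpace.single b 1)) θ (EuclideanSpace.single a 1)

/-!
With the empirical second moment matrix `C = (1/M) ∑ₖ vₖ vₖᵀ`, the objective is the pairing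
`f(θ) = ∑ᵢⱼ Cᵢⱼ (∂ᵢ∂ⱼ l + ½ ∂ᵢl ∂ⱼl)`, linear in the functions of `θ` that are assumed to have
Lipschitz Hessians. Hence `L = ∑ᵢⱼ |Cᵢⱼ| (|Mᵢⱼ| + ½ |Nᵢⱼ|)` is a Lipschitz constant for `∇²_θ f`.
By Cauchy–Schwarz, `L²` is at most a function of the projections times a function of `x`, and each
factor is integrable.
-/

lemma contDiff_of_contDiff_log {E : Type*} [NormedAddCommGroup E] [NormedSpace ℝ E]
    {n : WithTop ℕ∞} {f : E → ℝ} (hf : ∀ x, 0 < f x)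
    (hlog : ContDiff ℝ n fun x => Real.log (f x)) : ContDiff ℝ n f := by
  simpa only [Real.exp_log (hf _)] using hlog.exp

section SquareIntegrability

variable {X V : Type*} [MeasurableSpace X] [MeasurableSpace V] {μ : Measure X} {ν : Measure V}

lemma lintegral_ofReal_withDensity_ofReal {p : X → ℝ} (hp : Measurable p) (hp0 : ∀ x, 0 ≤ p x)
    (f : X → ℝ) :
    ∫⁻ x, ENNReal.ofReal (f x) ∂μ.withDensity (fun x => ENNReal.ofReal (p x)) =
      ∫⁻ x, ENNReal.ofReal (p x * f x) ∂μ := by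
  rw [lintegral_withDensity_eq_lintegral_mul_non_measurable μ hp.ennreal_ofReal
    (ae_of_all _ fun _ => ENNReal.ofReal_lt_top)]
  simp only [Pi.mul_apply, ENNReal.ofReal_mul (hp0 _)]

lemma integrable_withDensity_ofReal_iff {p : X → ℝ} (hp : Measurable p) (hp0 : ∀ x, 0 ≤ p x)
    {f : X → ℝ} :
    Integrable f (μ.withDensity fun x => ENNReal.ofReal (p x)) ↔
      Integrable (fun x => p x * f x) μ := by
  rw [integrable_withDensity_iff hp.ennreal_ofReal (ae_of_all _ fun _ => ENNReal.ofReal_lt_top)]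
  simp only [ENNReal.toReal_ofReal (hp0 _), mul_comm]

/-- Only `f ^ 2` is known to be measurable, so the conclusion concerns `|f| = √(f ^ 2)`. -/
lemma memLp_two_abs_of_integrable_sq {f : X → ℝ} (hf : Integrable (fun x => f x ^ 2) μ) :
    MemLp (fun x => |f x|) 2 μ := by
  have abs_meas : AEStronglyMeasurable (fun x => |f x|) μ := by
    simpa only [Real.sqrt_sq_eq_abs] using
      Real.continuous_sqrt.comp_aestronglyMeasurable hf.aestronglyMeasurable
  rw [memLp_two_iff_integrable_sq abs_meas]
  simpa only [sq_abs] using hf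

lemma memLp_two_of_integrable_sum_sq {ι : Type*} {s : Finset ι} {f : ι → X → ℝ}
    (hf : Integrable (fun x => ∑ i ∈ s, f i x ^ 2) μ) {i : ι} (hi : i ∈ s)
    (hfi : AEStronglyMeasurable (f i) μ) : MemLp (f i) 2 μ := by
  rw [memLp_two_iff_integrable_sq hfi]
  refine hf.mono' (hfi.pow 2) (ae_of_all _ fun x => ?_)
  rw [Real.norm_of_nonneg (sq_nonneg _)]
  exact Finset.single_le_sum (f := fun i => f i x ^ 2) (fun _ _ => sq_nonneg _) hi

lemma lintegral_lintegral_ofReal_sq_sum_mul_lt_top {ι : Type*} (s : Finset ι)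
    {f : ι → V → ℝ} {g : ι → X → ℝ} (hf : ∀ i ∈ s, MemLp (f i) 2 ν)
    (hg : ∀ i ∈ s, MemLp (g i) 2 μ) :
    ∫⁻ v, ∫⁻ x, ENNReal.ofReal ((∑ i ∈ s, f i v * g i x) ^ 2) ∂μ ∂ν < ⊤ := by
  have hF : ∫⁻ v, ENNReal.ofReal (∑ i ∈ s, f i v ^ 2) ∂ν < ⊤ :=
    (integrable_finsetSum s fun i hi => (hf i hi).integrable_sq).lintegral_lt_top
  have hG : ∫⁻ x, ENNReal.ofReal (∑ i ∈ s, g i x ^ 2) ∂μ < ⊤ :=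
    (integrable_finsetSum s fun i hi => (hg i hi).integrable_sq).lintegral_lt_top
  calc ∫⁻ v, ∫⁻ x, ENNReal.ofReal ((∑ i ∈ s, f i v * g i x) ^ 2) ∂μ ∂ν
      ≤ ∫⁻ v, ∫⁻ x, ENNReal.ofReal (∑ i ∈ s, f i v ^ 2) * ENNReal.ofReal (∑ i ∈ s, g i x ^ 2)
          ∂μ ∂ν := by
        gcongr with v x
        rw [← ENNReal.ofReal_mul (Finset.sum_nonneg fun _ _ => sq_nonneg _)]
        exact ENNReal.ofReal_le_ofReal (Finset.sum_mul_sq_le_sq_mul_sq s _ _)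
    _ = (∫⁻ v, ENNReal.ofReal (∑ i ∈ s, f i v ^ 2) ∂ν) *
          ∫⁻ x, ENNReal.ofReal (∑ i ∈ s, g i x ^ 2) ∂μ := by
        simp only [lintegral_const_mul' _ _ ENNReal.ofReal_ne_top, lintegral_mul_const' _ _ hG.ne]
    _ < ⊤ := ENNReal.mul_lt_top hF hG

end SquareIntegrability

section ThetaHessian

open scoped Matrix.Norms.Frobenius

variable {K : ℕ} {θ : EuclideanSpace ℝ (Fin K)}

/-- The Hessian matrix `∇²_θ h(θ)`, with entries `thetaHess2 h θ a b`. Bundling the entries as a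
matrix makes the Frobenius norm and the vector space structure available. -/
def thetaHessian (h : EuclideanSpace ℝ (Fin K) → ℝ) (θ : EuclideanSpace ℝ (Fin K)) :
    Matrix (Fin K) (Fin K) ℝ :=
  Matrix.of (thetaHess2 h θ)

lemma frobenius_norm_eq_sqrt {m n : Type*} [Fintype m] [Fintype n] (A : Matrix m n ℝ) :
    ‖A‖ = √(∑ a, ∑ b, A a b ^ 2) := by
  simp only [Matrix.frobenius_norm_def, Real.sqrt_eq_rpow, Real.rpow_two, Real.norm_eq_abs, sq_abs]

lemma norm_thetaHessian_sub (h : EuclideanSpace ℝ (Fin K) → ℝ)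
    (θ₁ θ₂ : EuclideanSpace ℝ (Fin K)) :
    ‖thetaHessian h θ₁ - thetaHessian h θ₂‖ =
      √(∑ a, ∑ b, (thetaHess2 h θ₁ a b - thetaHess2 h θ₂ a b) ^ 2) :=
  frobenius_norm_eq_sqrt _

lemma thetaHess2_eq_iteratedFDeriv {h : EuclideanSpace ℝ (Fin K) → ℝ} (hh : ContDiffAt ℝ 2 h θ)
    (a b : Fin K) :
    thetaHess2 h θ a b =
      iteratedFDeriv ℝ 2 h θ ![EuclideanSpace.single a 1, EuclideanSpace.single b 1] := by
  have fderiv_diff : DifferentiableAt ℝ (fderiv ℝ h) θ :=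
    (hh.fderiv_right (m := 1) (by norm_num)).differentiableAt one_ne_zero
  rw [thetaHess2, fderiv_clm_apply fderiv_diff (differentiableAt_const _),
    iteratedFDeriv_two_apply]
  simp

lemma thetaHessian_add {g h : EuclideanSpace ℝ (Fin K) → ℝ} (hg : ContDiffAt ℝ 2 g θ)
    (hh : ContDiffAt ℝ 2 h θ) :
    thetaHessian (fun θ => g θ + h θ) θ = thetaHessian g θ + thetaHessian h θ := by
  ext a b
  simp only [thetaHessian, Matrix.of_apply, Matrix.add_apply, thetaHess2_eq_iteratedFDeriv hg,
    thetaHess2_eq_iteratedFDeriv hh, thetaHess2_eq_iteratedFDeriv (hg.add hh)]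
  exact DFunLike.congr_fun (iteratedFDeriv_add_apply hg hh) _

lemma thetaHessian_const_mul {h : EuclideanSpace ℝ (Fin K) → ℝ} (hh : ContDiffAt ℝ 2 h θ) (c : ℝ) :
    thetaHessian (fun θ => c * h θ) θ = c • thetaHessian h θ := by
  ext a b
  simp only [thetaHessian, Matrix.of_apply, Matrix.smul_apply, thetaHess2_eq_iteratedFDeriv hh,
    thetaHess2_eq_iteratedFDeriv (contDiffAt_const.mul hh)]
  exact DFunLike.congr_fun (iteratedFDeriv_const_smul_apply' (a := c) hh) _

lemma thetaHessian_sum {ι : Type*} {s : Finset ι} {h : ι → EuclideanSpace ℝ (Fin K) → ℝ}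
    (hh : ∀ i ∈ s, ContDiffAt ℝ 2 (h i) θ) :
    thetaHessian (fun θ => ∑ i ∈ s, h i θ) θ = ∑ i ∈ s, thetaHessian (h i) θ := by
  ext a b
  simp only [thetaHessian, Matrix.of_apply, Matrix.sum_apply,
    thetaHess2_eq_iteratedFDeriv (ContDiffAt.sum hh)]
  rw [iteratedFDeriv_fun_sum_apply hh, sum_apply]
  exact Finset.sum_congr rfl fun i hi => (thetaHess2_eq_iteratedFDeriv (hh i hi) a b).symm

end ThetaHessian

section ScoreMatching

open scoped Matrix.Norms.Frobenius

variable {D K M : ℕ} {pm : EuclideanSpace ℝ (Fin K) → (Fin D → ℝ) → ℝ}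

/-- The `(i, j)` entry of `∇ₓ s_m + ½ s_m s_mᵀ`, whose pairing with `v vᵀ` is the sliced score
matching integrand `vᵀ ∇ₓ s_m v + ½ (vᵀ s_m)²`. -/
def scoreMatchingEntry (pm : EuclideanSpace ℝ (Fin K) → (Fin D → ℝ) → ℝ)
    (θ : EuclideanSpace ℝ (Fin K)) (x : Fin D → ℝ) (i j : Fin D) : ℝ :=
  d2Lx pm θ x i j + 1 / 2 * (dLx pm θ x i * dLx pm θ x j)

/-- The `(i, j)` entry of the empirical (uncentred) second moment matrix `(1/M) ∑ₖ vₖ vₖᵀ` of the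
projection vectors. -/
def empiricalSecondMoment (vs : Fin M → Fin D → ℝ) (i j : Fin D) : ℝ :=
  1 / (M : ℝ) * ∑ k, vs k i * vs k j

lemma avgF_eq_sum_empiricalSecondMoment_mul (θ : EuclideanSpace ℝ (Fin K)) (x : Fin D → ℝ)
    (vs : Fin M → Fin D → ℝ) :
    avgF pm θ x vs =
      ∑ q : Fin D × Fin D,
        empiricalSecondMoment vs q.1 q.2 * scoreMatchingEntry pm θ x q.1 q.2 := by
  have integrand_eq (v : Fin D → ℝ) :
      (∑ i, ∑ j, v i * v j * d2Lx pm θ x i j) + 1 / 2 * (∑ i, v i * dLx pm θ x i) ^ 2 =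
        ∑ q : Fin D × Fin D, v q.1 * v q.2 * scoreMatchingEntry pm θ x q.1 q.2 := by
    rw [sq, Finset.sum_mul_sum, Fintype.sum_prod_type]
    simp only [Finset.mul_sum, ← Finset.sum_add_distrib, scoreMatchingEntry]
    exact Finset.sum_congr rfl fun i _ => Finset.sum_congr rfl fun j _ => by ring
  simp only [avgF, integrand_eq, empiricalSecondMoment]
  rw [Finset.sum_comm, Finset.mul_sum]
  simp only [mul_assoc, Finset.sum_mul]

lemma memLp_two_empiricalSecondMoment {P : Measure (Fin M → Fin D → ℝ)}
    (hP : ∀ k, Integrable (fun vs => ∑ i, ∑ j, (vs k i * vs k j) ^ 2) P) (i j : Fin D) :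
    MemLp (fun vs => empiricalSecondMoment vs i j) 2 P := by
  have entry_memLp (k : Fin M) : MemLp (fun vs => vs k i * vs k j) 2 P := by
    have hPk : Integrable (fun vs => ∑ q : Fin D × Fin D, (vs k q.1 * vs k q.2) ^ 2) P := by
      simpa only [Fintype.sum_prod_type] using hP k
    exact memLp_two_of_integrable_sum_sq hPk (Finset.mem_univ (i, j)) (by fun_prop)
  exact (memLp_finsetSum Finset.univ fun k _ => entry_memLp k).const_mul (1 / (M : ℝ))

lemma contDiff_dLx {m n : WithTop ℕ∞}
    (hl : ContDiff ℝ n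
      (fun p : EuclideanSpace ℝ (Fin K) × (Fin D → ℝ) => Real.log (pm p.1 p.2)))
    (hmn : m + 1 ≤ n) (i : Fin D) :
    ContDiff ℝ m
      (fun p : EuclideanSpace ℝ (Fin K) × (Fin D → ℝ) => dLx pm p.1 p.2 i) :=
  ContDiff.fderiv_apply (hl.comp (contDiff_fst.fst.prodMk contDiff_snd)) contDiff_snd
    contDiff_const hmn

lemma contDiff_d2Lx {m n : WithTop ℕ∞}
    (hl : ContDiff ℝ n
      (fun p : EuclideanSpace ℝ (Fin K) × (Fin D → ℝ) => Real.log (pm p.1 p.2)))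
    (hmn : m + 1 + 1 ≤ n) (i j : Fin D) :
    ContDiff ℝ m
      (fun p : EuclideanSpace ℝ (Fin K) × (Fin D → ℝ) => d2Lx pm p.1 p.2 i j) :=
  ContDiff.fderiv_apply
    ((contDiff_dLx hl hmn j).comp (contDiff_fst.fst.prodMk contDiff_snd)) contDiff_snd
    contDiff_const le_rfl

variable {x : Fin D → ℝ} {θ₁ θ₂ : EuclideanSpace ℝ (Fin K)} {d : ℝ}

lemma norm_thetaHessian_scoreMatchingEntry_sub_le {i j : Fin D} {m n : ℝ}
    (hd2L : ContDiff ℝ 2 fun θ => d2Lx pm θ x i j)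
    (hdLmul : ContDiff ℝ 2 fun θ => dLx pm θ x i * dLx pm θ x j)
    (hm : ‖thetaHessian (fun θ => d2Lx pm θ x i j) θ₁
      - thetaHessian (fun θ => d2Lx pm θ x i j) θ₂‖ ≤ m * d)
    (hn : ‖thetaHessian (fun θ => dLx pm θ x i * dLx pm θ x j) θ₁
      - thetaHessian (fun θ => dLx pm θ x i * dLx pm θ x j) θ₂‖ ≤ n * d) :
    ‖thetaHessian (fun θ => scoreMatchingEntry pm θ x i j) θ₁
      - thetaHessian (fun θ => scoreMatchingEntry pm θ x i j) θ₂‖ ≤ (m + 1 / 2 * n) * d := by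
  have entry_hessian (θ : EuclideanSpace ℝ (Fin K)) :
      thetaHessian (fun θ => scoreMatchingEntry pm θ x i j) θ =
        thetaHessian (fun θ => d2Lx pm θ x i j) θ
          + (1 / 2 : ℝ) • thetaHessian (fun θ => dLx pm θ x i * dLx pm θ x j) θ := by
    rw [← thetaHessian_const_mul hdLmul.contDiffAt]
    exact thetaHessian_add hd2L.contDiffAt (contDiff_const.mul hdLmul).contDiffAt
  rw [entry_hessian, entry_hessian, add_sub_add_comm, ← smul_sub]
  refine (norm_add_le _ _).trans ?_
  rw [norm_smul, Real.norm_of_nonneg one_half_pos.le]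
  linarith

lemma norm_thetaHessian_avgF_sub_le {C : Fin D → Fin D → ℝ} (vs : Fin M → Fin D → ℝ)
    (hentry : ∀ i j, ContDiff ℝ 2 fun θ => scoreMatchingEntry pm θ x i j)
    (hC : ∀ i j, ‖thetaHessian (fun θ => scoreMatchingEntry pm θ x i j) θ₁
      - thetaHessian (fun θ => scoreMatchingEntry pm θ x i j) θ₂‖ ≤ C i j * d) :
    ‖thetaHessian (fun θ => avgF pm θ x vs) θ₁ - thetaHessian (fun θ => avgF pm θ x vs) θ₂‖ ≤
      (∑ q : Fin D × Fin D, |empiricalSecondMoment vs q.1 q.2| * C q.1 q.2) * d := by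
  have avgF_hessian (θ : EuclideanSpace ℝ (Fin K)) :
      thetaHessian (fun θ => avgF pm θ x vs) θ =
        ∑ q : Fin D × Fin D, empiricalSecondMoment vs q.1 q.2 •
          thetaHessian (fun θ => scoreMatchingEntry pm θ x q.1 q.2) θ := by
    simp only [avgF_eq_sum_empiricalSecondMoment_mul]
    rw [thetaHessian_sum fun q _ => (contDiff_const.mul (hentry q.1 q.2)).contDiffAt]
    simp only [thetaHessian_const_mul (hentry _ _).contDiffAt]
  rw [avgF_hessian, avgF_hessian, ← Finset.sum_sub_distrib, Finset.sum_mul]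
  refine norm_sum_le_of_le _ fun q _ => ?_
  rw [← smul_sub, norm_smul, Real.norm_eq_abs, mul_assoc]
  exact mul_le_mul_of_nonneg_left (hC q.1 q.2) (abs_nonneg _)

end ScoreMatching

theorem ssm_theta_hessian_lipschitz_general {D K M : ℕ}
    {pm : EuclideanSpace ℝ (Fin K) → (Fin D → ℝ) → ℝ}
    (μx : Measure (Fin D → ℝ)) (μvs : Measure (Fin M → Fin D → ℝ))
    (hpm_pos : ∀ θ x, 0 < pm θ x)
    (hpm : ContDiff ℝ 4 (fun p : EuclideanSpace ℝ (Fin K) × (Fin D → ℝ) => pm p.1 p.2))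
    (S : Set (EuclideanSpace ℝ (Fin K)))
    {Mc Nc : Fin D → Fin D → (Fin D → ℝ) → ℝ}
    (hMc : ∀ (i j : Fin D), ∀ θ₁ ∈ S, ∀ θ₂ ∈ S, ∀ x,
      √(∑ a, ∑ b, (thetaHess2 (fun θ => d2Lx pm θ x i j) θ₁ a b
          - thetaHess2 (fun θ => d2Lx pm θ x i j) θ₂ a b) ^ 2)
        ≤ Mc i j x * ‖θ₁ - θ₂‖)
    (hNc : ∀ (i j : Fin D), ∀ θ₁ ∈ S, ∀ θ₂ ∈ S, ∀ x,
      √(∑ a, ∑ b, (thetaHess2 (fun θ => dLx pm θ x i * dLx pm θ x j) θ₁ a b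
          - thetaHess2 (fun θ => dLx pm θ x i * dLx pm θ x j) θ₂ a b) ^ 2)
        ≤ Nc i j x * ‖θ₁ - θ₂‖)
    (hMcint : ∀ i j, Integrable (fun x => Mc i j x ^ 2) μx)
    (hNcint : ∀ i j, Integrable (fun x => Nc i j x ^ 2) μx)
    (hvs : ∀ k, Integrable (fun vs => ∑ i, ∑ j, (vs k i * vs k j) ^ 2) μvs) :
    ∃ L : (Fin D → ℝ) → (Fin M → Fin D → ℝ) → ℝ,
      (∀ x vs, 0 ≤ L x vs) ∧
      (∀ θ₁ ∈ S, ∀ θ₂ ∈ S, ∀ x vs,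
        √(∑ a, ∑ b, (thetaHess2 (fun θ => avgF pm θ x vs) θ₁ a b
            - thetaHess2 (fun θ => avgF pm θ x vs) θ₂ a b) ^ 2)
          ≤ L x vs * ‖θ₁ - θ₂‖) ∧
      ∫⁻ vs, ∫⁻ x, ENNReal.ofReal (L x vs ^ 2) ∂μx ∂μvs < ⊤ := by
  simp only [← norm_thetaHessian_sub] at hMc hNc ⊢
  have hlog := hpm.log fun p => (hpm_pos p.1 p.2).ne'
  have hd2L x i j : ContDiff ℝ 2 fun θ => d2Lx pm θ x i j :=
    (contDiff_d2Lx hlog (by norm_num) i j).comp (contDiff_id.prodMk contDiff_const)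
  have hdL x i : ContDiff ℝ 2 fun θ => dLx pm θ x i :=
    (contDiff_dLx hlog (by norm_num) i).comp (contDiff_id.prodMk contDiff_const)
  have hdLmul x i j : ContDiff ℝ 2 fun θ => dLx pm θ x i * dLx pm θ x j := (hdL x i).mul (hdL x j)
  refine ⟨fun x vs => ∑ q : Fin D × Fin D, |empiricalSecondMoment vs q.1 q.2| *
      (|Mc q.1 q.2 x| + 1 / 2 * |Nc q.1 q.2 x|), fun x vs => by positivity, ?_, ?_⟩
  · intro θ₁ hθ₁ θ₂ hθ₂ x vs
    refine norm_thetaHessian_avgF_sub_le (C := fun i j => |Mc i j x| + 1 / 2 * |Nc i j x|) vs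
      (fun i j => (hd2L x i j).add (contDiff_const.mul (hdLmul x i j)))
      fun i j => norm_thetaHessian_scoreMatchingEntry_sub_le (hd2L x i j) (hdLmul x i j) ?_ ?_
    · exact (hMc i j θ₁ hθ₁ θ₂ hθ₂ x).trans (by gcongr; exact le_abs_self _)
    · exact (hNc i j θ₁ hθ₁ θ₂ hθ₂ x).trans (by gcongr; exact le_abs_self _)
  · refine lintegral_lintegral_ofReal_sq_sum_mul_lt_top _
      (fun q _ => (memLp_two_empiricalSecondMoment hvs q.1 q.2).abs) fun q _ => ?_
    exact (memLp_two_abs_of_integrable_sq (hMcint q.1 q.2)).add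
      ((memLp_two_abs_of_integrable_sq (hNcint q.1 q.2)).const_mul _)

/-- **Lemma B.5 of the paper.** If the second `θ`-derivatives `∇²_θ ∂ᵢ∂ⱼ l_m` and
`∇²_θ(∂ᵢ l_m ∂ⱼ l_m)` are Lipschitz near `θ*` (in Frobenius norm) with square-integrable
constants `M_{ij}, N_{ij}`, and the i.i.d. projection vectors have `E[‖v‖²] < ∞` and
`E[‖v vᵀ‖_F²] < ∞`, then `∇²_θ f(θ; x, v_1^M)` is Lipschitz near `θ*` with a constant
`L(x, v_1^M) ≥ 0` satisfying `E_{p_d, p_v}[L²(x, v_1^M)] < ∞`. -/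
theorem ssm_theta_hessian_lipschitz
    (D K M : ℕ) (hD : 1 ≤ D) (hM : 1 ≤ M)
    (pd : (Fin D → ℝ) → ℝ)
    (pm : EuclideanSpace ℝ (Fin K) → (Fin D → ℝ) → ℝ)
    (θstar : EuclideanSpace ℝ (Fin K))
    (μv : Measure (Fin D → ℝ)) [IsProbabilityMeasure μv]
    -- data density: positive, differentiable, integrates to one
    (hpd_pos : ∀ x, 0 < pd x) (hpd_diff : Differentiable ℝ pd)
    (hpd_prob : ∫ x, pd x = 1)
    -- model densities: positive and sufficiently smooth
    (hpm_pos : ∀ θ x, 0 < pm θ x)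
    (hsmooth : ContDiff ℝ (⊤ : ℕ∞)
      (fun p : EuclideanSpace ℝ (Fin K) × (Fin D → ℝ) => Real.log (pm p.1 p.2)))
    -- Lipschitz assumptions near θ* with square-integrable constants
    (r : ℝ) (hr : 0 < r)
    (Mc Nc : Fin D → Fin D → (Fin D → ℝ) → ℝ)
    (hMc : ∀ (i j : Fin D), ∀ θ₁ ∈ Metric.ball θstar r, ∀ θ₂ ∈ Metric.ball θstar r, ∀ x,
      Real.sqrt (∑ a, ∑ b, (thetaHess2 (fun θ => d2Lx pm θ x i j) θ₁ a b
          - thetaHess2 (fun θ => d2Lx pm θ x i j) θ₂ a b) ^ 2)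
        ≤ Mc i j x * ‖θ₁ - θ₂‖)
    (hNc : ∀ (i j : Fin D), ∀ θ₁ ∈ Metric.ball θstar r, ∀ θ₂ ∈ Metric.ball θstar r, ∀ x,
      Real.sqrt (∑ a, ∑ b, (thetaHess2 (fun θ => dLx pm θ x i * dLx pm θ x j) θ₁ a b
          - thetaHess2 (fun θ => dLx pm θ x i * dLx pm θ x j) θ₂ a b) ^ 2)
        ≤ Nc i j x * ‖θ₁ - θ₂‖)
    (hMcint : ∀ i j, Integrable (fun x => pd x * Mc i j x ^ 2))
    (hNcint : ∀ i j, Integrable (fun x => pd x * Nc i j x ^ 2))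
    -- moments of the projection distribution
    (hv2 : Integrable (fun v => ∑ i, (v i) ^ 2) μv)
    (hv4 : Integrable (fun v => ∑ i, ∑ j, (v i * v j) ^ 2) μv) :
    -- conclusion: ∇²_θ f is Lipschitz near θ* with square-integrable constant
    ∃ L : (Fin D → ℝ) → (Fin M → Fin D → ℝ) → ℝ,
      (∀ x vs, 0 ≤ L x vs) ∧
      (∀ θ₁ ∈ Metric.ball θstar r, ∀ θ₂ ∈ Metric.ball θstar r, ∀ x vs,
        Real.sqrt (∑ a, ∑ b, (thetaHess2 (fun θ => avgF pm θ x vs) θ₁ a b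
            - thetaHess2 (fun θ => avgF pm θ x vs) θ₂ a b) ^ 2)
          ≤ L x vs * ‖θ₁ - θ₂‖) ∧
      (∫⁻ vs, ∫⁻ x, ENNReal.ofReal (pd x * L x vs ^ 2) ∂volume
          ∂(Measure.pi fun _ : Fin M => μv)) < ⊤ := by
  have hpd_meas := hpd_diff.continuous.measurable
  have hpd_nonneg x := (hpd_pos x).le
  simp only [← lintegral_ofReal_withDensity_ofReal hpd_meas hpd_nonneg]
  exact ssm_theta_hessian_lipschitz_general _ _ hpm_pos
    (contDiff_of_contDiff_log (fun p => hpm_pos p.1 p.2) (contDiff_infty.mp hsmooth 4)) _ hMc hNc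
    (fun i j => (integrable_withDensity_ofReal_iff hpd_meas hpd_nonneg).2 (hMcint i j))
    (fun i j => (integrable_withDensity_ofReal_iff hpd_meas hpd_nonneg).2 (hNcint i j))
    fun k => integrable_comp_eval (μ := fun _ => μv) (i := k) hv4
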